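/- Let G be a group acting faithfully on a set Z. Suppose Z contains a subset Z₀ and G contains an element g such that: (i) for every finite subset S of G there exists t ∈ G such that every element of t S t⁻¹ is supported in Z₀ (i.e. fixes every point of Z outside Z₀); and (ii) the set g^p • Z₀ is disjoint from Z₀ for every integer p ≥ 1. Then Hb^n(G, E) = 0 holds for all n ≥ 1 and all separable dual Banach G-modules E; in particular G is boundedly acyclic. -/

import Mathlib

open scoped BigOperators

/-- A cochain (function into a normed space) is bounded if its norms are uniformly bounded. -/
def IsBddCochain {G : Type*} {E : Type*} [NormedAddCommGroup E] {n : ℕ}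
    (f : (Fin n → G) → E) : Prop :=
  ∃ C : ℝ, ∀ g, ‖f g‖ ≤ C

/-- The inhomogeneous coboundary operator of bounded cohomology, for an action `π` of
`G` on `E`:
`(δf)(g₁,…,g_{n+1}) = g₁•f(g₂,…,g_{n+1}) + ∑_{i=1}^{n} (−1)^i f(g₁,…,g_i·g_{i+1},…,g_{n+1})`
`+ (−1)^{n+1} f(g₁,…,g_n)`. -/
def bddDelta {G : Type*} [Group G] {E : Type*} [NormedAddCommGroup E] [Module ℝ E]
    (π : G → E → E) (n : ℕ) (f : (Fin n → G) → E) : (Fin (n + 1) → G) → E :=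
  fun g =>
    π (g 0) (f (fun j => g j.succ)) +
    (∑ i : Fin n, ((-1 : ℝ) ^ ((i : ℕ) + 1)) •
      f (fun j => if (j : ℕ) < (i : ℕ) then g (Fin.castSucc j)
        else if (j : ℕ) = (i : ℕ) then g (Fin.castSucc j) * g j.succ
        else g j.succ)) +
    ((-1 : ℝ) ^ (n + 1)) • f (fun j => g (Fin.castSucc j))

/-- Vanishing of the bounded cohomology `Hb^n(G,E)` for all `n ≥ 1`, with respect to the
`G`-action `π` on `E`: every bounded cocycle of degree `n ≥ 1` is the coboundary of a
bounded cochain. -/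
def HbVanish {G : Type*} [Group G] {E : Type*} [NormedAddCommGroup E] [Module ℝ E]
    (π : G → E → E) : Prop :=
  ∀ (n : ℕ) (f : (Fin (n + 1) → G) → E), IsBddCochain f →
    bddDelta π (n + 1) f = 0 →
    ∃ b : (Fin n → G) → E, IsBddCochain b ∧ bddDelta π n b = f

/-- A group is boundedly acyclic if `Hb^n(G,ℝ) = 0` for all `n ≥ 1`, where `ℝ` carries
the trivial `G`-action. -/
def BoundedlyAcyclic (G : Type*) [Group G] : Prop :=
  HbVanish (G := G) (E := ℝ) (fun _ v => v)

/-- The contragredient action of `G` on the continuous dual of `F` induced by an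
isometric action `ρ` of `G` on `F`: `(g • φ)(v) = φ (g⁻¹ • v)`. -/
def contragredient {G : Type*} [Group G] {F : Type*} [NormedAddCommGroup F]
    [NormedSpace ℝ F] (ρ : G →* (F ≃ₗᵢ[ℝ] F)) : G → (F →L[ℝ] ℝ) → (F →L[ℝ] ℝ) :=
  fun g φ => φ.comp (ρ g⁻¹).toLinearIsometry.toContinuousLinearMap



/-! ### Part 1: algebra of cochains -/

section Algebra

/-- homogeneous cochain attached to an inhomogeneous one -/
def homog {G : Type*} [Group G] {E : Type*} [AddCommGroup E] [Module ℝ E]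
    (π : G →* Module.End ℝ E) {m : ℕ} (f : (Fin m → G) → E) : (Fin (m + 1) → G) → E :=
  fun y => π (y 0) (f (fun j => (y j.castSucc)⁻¹ * y j.succ))

/-- homogeneous coboundary -/
def homDelta {X : Type*} {E : Type*} [AddCommGroup E] [Module ℝ E] {m : ℕ}
    (h : (Fin m → X) → E) : (Fin (m + 1) → X) → E :=
  fun y => ∑ j : Fin (m + 1), ((-1 : ℝ) ^ (j : ℕ)) • h (fun k => y (j.succAbove k))

theorem homDelta_homog {G : Type*} [Group G] {E : Type*} [NormedAddCommGroup E] [Module ℝ E]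
    (π : G →* Module.End ℝ E) {m : ℕ} (f : (Fin m → G) → E) (y : Fin (m + 2) → G) :
    homDelta (homog π f) y
      = π (y 0) (bddDelta (fun g => π g) m f (fun j => (y j.castSucc)⁻¹ * y j.succ)) := by
  unfold homDelta bddDelta
  rw [Fin.sum_univ_succ, Fin.sum_univ_castSucc, ← add_assoc]
  simp only [map_add, map_sum, map_smul]
  congr 1
  · congr 1
    · simp only [homog, Fin.val_zero, pow_zero, one_smul, Fin.succAbove_zero]
      rw [← Module.End.mul_apply, ← map_mul]
      simp
    · refine Finset.sum_congr rfl fun i _ => ?_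
      simp only [homog, Fin.val_succ, Fin.val_castSucc]
      congr 2
      congr 1
      funext k
      have e1 : ∀ k : Fin (m + 1), (k : ℕ) ≤ i → (i.castSucc.succ).succAbove k = k.castSucc := by
        intro k hk
        apply Fin.succAbove_of_castSucc_lt
        simp [Fin.lt_def]; omega
      have e2 : ∀ k : Fin (m + 1), (i : ℕ) < k → (i.castSucc.succ).succAbove k = k.succ := by
        intro k hk
        apply Fin.succAbove_of_le_castSucc
        simp [Fin.le_def]; omega
      split_ifs with h1 h2
      · rw [e1 _ (by simp; omega), e1 _ (by simp; omega)]; rfl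
      · rw [e1 _ (by simp; omega), e2 _ (by simp; omega)]
        simp [mul_assoc]
      · rw [e2 _ (by simp; omega), e2 _ (by simp; omega)]; rfl
  · simp only [homog, Fin.val_succ, Fin.val_last, Fin.succ_last, Fin.succAbove_last]
    rfl

/-- partial products -/
def pprod {G : Type*} [Group G] {m : ℕ} (g : Fin m → G) : Fin (m + 1) → G :=
  fun j => Fin.partialProd g j

theorem pprod_zero {G : Type*} [Group G] {m : ℕ} (g : Fin m → G) : pprod g 0 = 1 := by
  simp [pprod]

theorem pprod_diff {G : Type*} [Group G] {m : ℕ} (g : Fin m → G) :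
    (fun j : Fin m => (pprod g j.castSucc)⁻¹ * pprod g j.succ) = g := by
  funext j
  simp [pprod, Fin.partialProd_succ]

theorem pprod_quot {G : Type*} [Group G] {m : ℕ} (y : Fin (m + 1) → G) :
    (fun j => y 0 * pprod (fun j : Fin m => (y j.castSucc)⁻¹ * y j.succ) j) = y := by
  funext j
  induction j using Fin.induction with
  | zero => simp [pprod_zero]
  | succ i ih =>
    simp only [pprod, Fin.partialProd_succ] at ih ⊢
    rw [← mul_assoc, ih]; simp

theorem homog_pprod {G : Type*} [Group G] {E : Type*} [AddCommGroup E] [Module ℝ E]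
    (π : G →* Module.End ℝ E) {m : ℕ} (f : (Fin m → G) → E) (g : Fin m → G) :
    homog π f (pprod g) = f g := by
  simp only [homog, pprod_diff, pprod_zero]; simp

theorem homog_equiv {G : Type*} [Group G] {E : Type*} [AddCommGroup E] [Module ℝ E]
    (π : G →* Module.End ℝ E) {m : ℕ} (f : (Fin m → G) → E) (h : G) (y : Fin (m + 1) → G) :
    homog π f (fun j => h * y j) = π h (homog π f y) := by
  simp only [homog]
  rw [← Module.End.mul_apply, ← map_mul]
  simp [mul_assoc]

/-- Coboundary of the inhomogeneous cochain of an equivariant homogeneous cochain. -/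
theorem bddDelta_of_hom {G : Type*} [Group G] {E : Type*} [NormedAddCommGroup E] [Module ℝ E]
    (π : G →* Module.End ℝ E) {m : ℕ} (b : (Fin (m + 1) → G) → E)
    (hb : ∀ h y, b (fun j => h * y j) = π h (b y)) (g : Fin (m + 1) → G) :
    bddDelta (fun g => π g) m (fun g => b (pprod g)) g = homDelta b (pprod g) := by
  have h1 : homog π (fun g => b (pprod g)) = b := by
    funext y
    simp only [homog]
    rw [← hb, pprod_quot]
  have h2 := homDelta_homog π (fun g => b (pprod g)) (pprod g)
  rw [h1, pprod_zero, pprod_diff] at h2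
  rw [h2]; simp

end Algebra

section Prism

/-- face map on sequences -/
def sface {X : Type*} (j : ℕ) (w : ℕ → X) : ℕ → X := fun m => if m < j then w m else w (m + 1)

/-- prism join on sequences -/
def sjoin {X : Type*} (i : ℕ) (y z : ℕ → X) : ℕ → X := fun m => if m ≤ i then y m else z (m - 1)

/-- mixed sequence -/
def smix {X : Type*} (i : ℕ) (y z : ℕ → X) : ℕ → X := fun m => if m < i then y m else z m

theorem sface_sjoin_lt {X : Type*} {i j : ℕ} (h : j < i + 1) (y z : ℕ → X) :
    sface j (sjoin (i + 1) y z) = sjoin i (sface j y) (sface j z) := by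
  funext m
  simp only [sface, sjoin]
  split_ifs <;> first | rfl | (congr 1; omega) | omega

theorem sface_sjoin_gt {X : Type*} {i j : ℕ} (h : i < j) (y z : ℕ → X) :
    sface (j + 1) (sjoin i y z) = sjoin i (sface j y) (sface j z) := by
  funext m
  simp only [sface, sjoin]
  split_ifs <;> first | rfl | (congr 1; omega) | omega

theorem sface_sjoin_eq {X : Type*} (i : ℕ) (y z : ℕ → X) :
    sface i (sjoin i y z) = smix i y z := by
  funext m
  simp only [sface, sjoin, smix]
  split_ifs <;> first | rfl | (congr 1; omega) | omega

theorem sface_sjoin_eq' {X : Type*} (i : ℕ) (y z : ℕ → X) :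
    sface (i + 1) (sjoin i y z) = smix (i + 1) y z := by
  funext m
  simp only [sface, sjoin, smix]
  split_ifs <;> first | rfl | (congr 1; omega) | omega

theorem prism_seq {X E : Type*} [AddCommGroup E] [Module ℝ E] (n : ℕ) (F : (ℕ → X) → E)
    (hF : ∀ w : ℕ → X, ∑ j ∈ Finset.range (n + 2), ((-1 : ℝ) ^ j) • F (sface j w) = 0)
    (y z : ℕ → X) :
    F (smix 0 y z) - F (smix (n + 1) y z) =
      ∑ j ∈ Finset.range (n + 1), ((-1 : ℝ) ^ j) •
        ∑ i ∈ Finset.range n, ((-1 : ℝ) ^ i) • F (sjoin i (sface j y) (sface j z)) := by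
  set B : ℕ → ℕ → E := fun i j => ((-1 : ℝ) ^ (i + j)) • F (sjoin i (sface j y) (sface j z)) with hB
  -- the sum for fixed i
  have key : ∀ i ∈ Finset.range (n + 1),
      ∑ j ∈ Finset.range i, ((-1 : ℝ) ^ (i + j)) • F (sface j (sjoin i y z))
        + (F (smix i y z) - F (smix (i + 1) y z))
        - ∑ j ∈ Finset.range (n - i), B i (i + 1 + j) = 0 := by
    intro i hi
    have hi' : i ≤ n := by simpa [Nat.lt_succ_iff] using hi
    have h0 := hF (sjoin i y z)
    have h1 : n + 2 = i + 1 + 1 + (n - i) := by omega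
    rw [h1, Finset.sum_range_add, Finset.sum_range_succ, Finset.sum_range_succ] at h0
    have h2 := congrArg (fun e => ((-1 : ℝ) ^ i) • e) h0
    simp only [smul_add, Finset.smul_sum, smul_smul, smul_zero, ← pow_add] at h2
    rw [sface_sjoin_eq, sface_sjoin_eq'] at h2
    have e1 : (-1 : ℝ) ^ (i + i) = 1 := Even.neg_one_pow ⟨i, rfl⟩
    have e2 : (-1 : ℝ) ^ (i + (i + 1)) = -1 := Odd.neg_one_pow ⟨i, by omega⟩
    rw [e1, e2] at h2
    have e3 : ∑ j ∈ Finset.range (n - i), ((-1 : ℝ) ^ (i + (i + 1 + 1 + j))) •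
        F (sface (i + 1 + 1 + j) (sjoin i y z))
        = - ∑ j ∈ Finset.range (n - i), B i (i + 1 + j) := by
      rw [← Finset.sum_neg_distrib]
      refine Finset.sum_congr rfl fun j _ => ?_
      have : i + 1 + 1 + j = (i + 1 + j) + 1 := by omega
      rw [this, sface_sjoin_gt (by omega)]
      simp only [hB]
      rw [← neg_smul]; congr 1
      rw [← add_assoc, pow_succ]; ring
    rw [e3] at h2
    rw [← h2]; simp only [one_smul, neg_smul]; abel
  have tot := Finset.sum_eq_zero key
  rw [Finset.sum_sub_distrib, Finset.sum_add_distrib] at tot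
  have t2 : ∑ i ∈ Finset.range (n + 1), (F (smix i y z) - F (smix (i + 1) y z))
      = F (smix 0 y z) - F (smix (n + 1) y z) := by
    rw [Finset.sum_range_sub' (fun i => F (smix i y z))]
  have t1 : ∑ i ∈ Finset.range (n + 1),
      ∑ j ∈ Finset.range i, ((-1 : ℝ) ^ (i + j)) • F (sface j (sjoin i y z))
      = - ∑ i ∈ Finset.range n, ∑ j ∈ Finset.range (i + 1), B i j := by
    rw [Finset.sum_range_succ', ← Finset.sum_neg_distrib]
    simp only [Finset.range_zero, Finset.sum_empty, add_zero]
    refine Finset.sum_congr rfl fun i _ => ?_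
    rw [← Finset.sum_neg_distrib]
    refine Finset.sum_congr rfl fun j hj => ?_
    rw [sface_sjoin_lt (by simpa using hj)]
    simp only [hB]
    rw [← neg_smul]; congr 1
    rw [show i + 1 + j = (i + j) + 1 by omega, pow_succ]; ring
  have t3 : ∑ i ∈ Finset.range (n + 1), ∑ j ∈ Finset.range (n - i), B i (i + 1 + j)
      = ∑ i ∈ Finset.range n, ∑ j ∈ Finset.range (n - i), B i (i + 1 + j) := by
    rw [Finset.sum_range_succ]; simp
  have t4 : ∑ i ∈ Finset.range n, ∑ j ∈ Finset.range (i + 1), B i j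
      + ∑ i ∈ Finset.range n, ∑ j ∈ Finset.range (n - i), B i (i + 1 + j)
      = ∑ i ∈ Finset.range n, ∑ j ∈ Finset.range (n + 1), B i j := by
    rw [← Finset.sum_add_distrib]
    refine Finset.sum_congr rfl fun i hi => ?_
    have : i < n := by simpa using hi
    rw [show n + 1 = (i + 1) + (n - i) by omega, Finset.sum_range_add _ (i + 1) (n - i)]
  have t5 : ∑ j ∈ Finset.range (n + 1), ((-1 : ℝ) ^ j) •
        ∑ i ∈ Finset.range n, ((-1 : ℝ) ^ i) • F (sjoin i (sface j y) (sface j z))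
      = ∑ i ∈ Finset.range n, ∑ j ∈ Finset.range (n + 1), B i j := by
    rw [Finset.sum_comm]
    refine Finset.sum_congr rfl fun j _ => ?_
    rw [Finset.smul_sum]
    refine Finset.sum_congr rfl fun i _ => ?_
    simp only [hB, smul_smul, pow_add]; rw [mul_comm]
  rw [t1, t2, t3] at tot
  rw [t5, ← t4]
  have := sub_eq_zero.mp tot
  rw [← this]; abel

/-- extension of a tuple to a sequence -/
def ext1 {X : Type*} [One X] {k : ℕ} (y : Fin k → X) : ℕ → X :=
  fun m => if h : m < k then y ⟨m, h⟩ else 1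

/-- prism operator -/
def prismD {X E : Type*} [One X] [AddCommGroup E] [Module ℝ E] {n : ℕ}
    (F : (Fin (n + 1) → X) → E) (y z : Fin n → X) : E :=
  ∑ i ∈ Finset.range n, ((-1 : ℝ) ^ i) • F (fun m => sjoin i (ext1 y) (ext1 z) m)

theorem sface_ext1 {X : Type*} [One X] {k : ℕ} (w : ℕ → X) (j : Fin (k + 1)) (m : Fin k) :
    sface j w m = w (j.succAbove m) := by
  simp only [sface, Fin.succAbove, Fin.lt_def, Fin.val_castSucc]
  split_ifs <;> simp

theorem prism {X E : Type*} [One X] [AddCommGroup E] [Module ℝ E] {n : ℕ}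
    (F : (Fin (n + 1) → X) → E) (hF : ∀ w, homDelta F w = 0) (y z : Fin (n + 1) → X) :
    F z - F y = ∑ j : Fin (n + 1), ((-1 : ℝ) ^ (j : ℕ)) •
      prismD F (fun k => y (j.succAbove k)) (fun k => z (j.succAbove k)) := by
  have h := prism_seq n (fun w : ℕ → X => F (fun m => w m)) (by
    intro w
    have := hF (fun m => w m)
    rw [homDelta, ← Fin.sum_univ_eq_sum_range
      (fun j => ((-1 : ℝ) ^ j) • F (fun m => sface j w m))] at *
    rw [← this]
    refine Finset.sum_congr rfl fun j _ => ?_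
    congr 2
    funext m
    exact sface_ext1 w j m) (ext1 y) (ext1 z)
  have e1 : (fun m : Fin (n + 1) => smix 0 (ext1 y) (ext1 z) m) = z := by
    funext m; have := m.2; simp [smix, ext1, this]; try omega
  have e2 : (fun m : Fin (n + 1) => smix (n + 1) (ext1 y) (ext1 z) m) = y := by
    funext m; simp [smix, ext1, Nat.lt_succ_iff.mp m.2]
  simp only [e1, e2] at h
  rw [h, ← Fin.sum_univ_eq_sum_range (fun j => ((-1 : ℝ) ^ j) •
        ∑ i ∈ Finset.range n, ((-1 : ℝ) ^ i) • F (fun m => sjoin i (sface j (ext1 y)) (sface j (ext1 z)) m))]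
  refine Finset.sum_congr rfl fun j _ => ?_
  congr 1
  refine Finset.sum_congr rfl fun i hi => ?_
  congr 2
  funext m
  have hi : i < n := by simpa using hi
  have ee : ∀ (y : Fin (n + 1) → X) (m : ℕ), m < n →
      sface j (ext1 y) m = ext1 (fun k => y (j.succAbove k)) m := by
    intro y m hm
    have := sface_ext1 (ext1 y) j ⟨m, hm⟩
    simp only at this
    rw [this]
    simp only [ext1, hm, dif_pos, Fin.is_lt]
  simp only [sjoin]
  split_ifs with h1
  · exact ee _ _ (by omega)
  · exact ee _ _ (by have := m.2; omega)

end Prism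


/-! ### Part 2: averages and smoothing -/

section Avg

/-- uniform average over a finite type -/
noncomputable def avg {Ω E : Type*} [Fintype Ω] [AddCommGroup E] [Module ℝ E] (h : Ω → E) : E :=
  (Fintype.card Ω : ℝ)⁻¹ • ∑ ω, h ω

theorem avg_const {Ω E : Type*} [Fintype Ω] [Nonempty Ω] [AddCommGroup E] [Module ℝ E] (e : E) :
    avg (fun _ : Ω => e) = e := by
  have : (Fintype.card Ω : ℝ) ≠ 0 := by exact_mod_cast Fintype.card_ne_zero
  simp only [avg, Finset.sum_const, Finset.card_univ]
  rw [← Nat.cast_smul_eq_nsmul ℝ, smul_smul, inv_mul_cancel₀ this, one_smul]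

theorem avg_sub {Ω E : Type*} [Fintype Ω] [AddCommGroup E] [Module ℝ E] (h k : Ω → E) :
    avg (fun ω => h ω - k ω) = avg h - avg k := by
  simp [avg, Finset.sum_sub_distrib, smul_sub]

theorem avg_smul {Ω E : Type*} [Fintype Ω] [AddCommGroup E] [Module ℝ E] (c : ℝ) (h : Ω → E) :
    avg (fun ω => c • h ω) = c • avg h := by
  simp only [avg, ← Finset.smul_sum]; rw [smul_comm]

theorem avg_sum {Ω E ι : Type*} [Fintype Ω] [AddCommGroup E] [Module ℝ E] (s : Finset ι)
    (h : ι → Ω → E) :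
    avg (fun ω => ∑ i ∈ s, h i ω) = ∑ i ∈ s, avg (h i) := by
  simp only [avg, ← Finset.smul_sum]; rw [Finset.sum_comm]

theorem avg_map {Ω E E' : Type*} [Fintype Ω] [AddCommGroup E] [Module ℝ E] [AddCommGroup E']
    [Module ℝ E'] (T : E →ₗ[ℝ] E') (h : Ω → E) : T (avg h) = avg (fun ω => T (h ω)) := by
  simp [avg, map_sum]

theorem avg_equiv {Ω Ω' E : Type*} [Fintype Ω] [Fintype Ω'] [AddCommGroup E] [Module ℝ E]
    (e : Ω ≃ Ω') (h : Ω' → E) : avg (fun ω => h (e ω)) = avg h := by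
  simp only [avg, Fintype.card_congr e]
  rw [Equiv.sum_comp e h]

theorem avg_prod {Ω Ω' E : Type*} [Fintype Ω] [Fintype Ω'] [AddCommGroup E] [Module ℝ E]
    (h : Ω → Ω' → E) : avg (fun ω : Ω × Ω' => h ω.1 ω.2) = avg (fun s => avg (fun x => h x s)) := by
  simp only [avg, Fintype.card_prod, Nat.cast_mul, mul_inv, ← Finset.smul_sum, smul_smul,
    Fintype.sum_prod_type]
  rw [Finset.sum_comm, mul_comm]

theorem norm_avg_le {Ω E : Type*} [Fintype Ω] [Nonempty Ω] [NormedAddCommGroup E]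
    [NormedSpace ℝ E] (h : Ω → E) (C : ℝ) (hC : ∀ ω, ‖h ω‖ ≤ C) : ‖avg h‖ ≤ C := by
  have h0 : (0 : ℝ) < (Fintype.card Ω : ℝ) := by exact_mod_cast Fintype.card_pos
  simp only [avg, norm_smul, norm_inv, Real.norm_natCast]
  rw [inv_mul_le_iff₀ h0]
  refine (norm_sum_le _ _).trans ((Finset.sum_le_sum fun ω _ => hC ω).trans ?_)
  simp

theorem smoothing {G E : Type*} [Group G] [NormedAddCommGroup E] [NormedSpace ℝ E]
    (π : G →* Module.End ℝ E) {n : ℕ} (Φ : (Fin (n + 1) → G) → E)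
    (hcoc : ∀ w, homDelta Φ w = 0) (heq : ∀ h y, Φ (fun j => h * y j) = π h (Φ y))
    (C : ℝ) (hC : ∀ y, ‖Φ y‖ ≤ C) (Ω : Type*) [Fintype Ω] [Nonempty Ω]
    (ψ : Ω → Fin (n + 1) → G) :
    ∃ b : (Fin n → G) → E, (∀ h y, b (fun j => h * y j) = π h (b y)) ∧ (∀ y, ‖b y‖ ≤ n * C) ∧
      ∀ g, avg (fun ω : Ω × Equiv.Perm (Fin (n + 1)) => Φ (fun k => g k * ψ ω.1 (ω.2 k))) - Φ g
        = homDelta b g := by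
  refine ⟨fun g => avg (fun ω : Ω × Equiv.Perm (Fin (n + 1)) =>
    prismD Φ g (fun k => g k * ψ ω.1 (ω.2 k.succ))), ?_, ?_, ?_⟩
  · intro h y
    simp only [avg_map]
    congr 1
    funext ω
    simp only [prismD, map_sum, map_smul]
    refine Finset.sum_congr rfl fun i hi => ?_
    have hi : i < n := by simpa using hi
    congr 1
    rw [← heq]
    congr 1
    funext m
    simp only [sjoin, ext1]
    have := m.2
    split_ifs <;> first | rfl | (exfalso; omega) | (simp [mul_assoc])
  · intro y
    apply norm_avg_le
    intro ω
    refine (norm_sum_le _ _).trans ((Finset.sum_le_sum (g := fun _ => C) fun i _ => ?_).trans ?_)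
    · rw [norm_smul]; simp [hC]
    · simp
  · intro g
    have h1 : ∀ ω : Ω × Equiv.Perm (Fin (n + 1)),
        Φ (fun k => g k * ψ ω.1 (ω.2 k)) - Φ g = _ := fun ω => prism Φ hcoc g _
    have h2 := congrArg avg (funext h1)
    rw [avg_sub, avg_const] at h2
    rw [h2, avg_sum, homDelta]
    refine Finset.sum_congr rfl fun j _ => ?_
    rw [avg_smul]
    congr 1
    let e : Ω × Equiv.Perm (Fin (n + 1)) ≃ Ω × Equiv.Perm (Fin (n + 1)) :=
      Equiv.prodCongr (Equiv.refl _) (Equiv.mulRight (j.cycleRange.symm))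
    refine Eq.trans ?_ (avg_equiv e _)
    congr 1
    funext ω
    simp [e, Fin.cycleRange_symm_succ]

end Avg

section Bessel

theorem avg_update {ι A : Type*} [Fintype ι] [DecidableEq ι] [Fintype A] [DecidableEq A]
    (φ : (ι → A) → ℝ) (i : ι) (b : A) :
    avg (fun x => φ (Function.update x i b))
      = avg (fun x => (Fintype.card A : ℝ) * (if x i = b then 1 else 0) * φ x) := by
  have e := Equiv.funSplitAt i A
  rw [← avg_equiv (Equiv.funSplitAt i A).symm, ← avg_equiv (Equiv.funSplitAt i A).symm
    (fun x => (Fintype.card A : ℝ) * (if x i = b then 1 else 0) * φ x)]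
  simp only [avg]
  congr 1
  rw [Fintype.sum_prod_type, Fintype.sum_prod_type]
  have h1 : ∀ (a : A) (y : {j // j ≠ i} → A),
      Function.update ((Equiv.funSplitAt i A).symm (a, y)) i b
        = (Equiv.funSplitAt i A).symm (b, y) := by
    intro a y
    funext k
    by_cases hk : k = i
    · subst hk; simp [Equiv.funSplitAt, Equiv.piSplitAt]
    · simp [Equiv.funSplitAt, Equiv.piSplitAt, hk]
  have h2 : ∀ (a : A) (y : {j // j ≠ i} → A), (Equiv.funSplitAt i A).symm (a, y) i = a := by
    intro a y; simp [Equiv.funSplitAt, Equiv.piSplitAt]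
  simp only [h1, h2]
  rw [Finset.sum_const, Finset.sum_eq_single b]
  · simp [Finset.mul_sum]
  · intro a _ ha; simp [ha]
  · simp

theorem bessel {ι A : Type*} [Fintype ι] [DecidableEq ι] [Fintype A] [DecidableEq A] [Nonempty A]
    (φ : (ι → A) → ℝ) (C : ℝ) (hφ : ∀ x, |φ x| ≤ C) (I : Finset ι) (b : A) :
    ∑ i ∈ I, (avg (fun x => φ (Function.update x i b)) - avg φ) ^ 2 ≤ Fintype.card A * C ^ 2 := by
  set q : ℝ := (Fintype.card A : ℝ) with hq
  have hq1 : 1 ≤ q := by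
    rw [hq]; exact_mod_cast Fintype.card_pos
  set u : ι → (ι → A) → ℝ := fun i x => q * (if x i = b then 1 else 0) - 1 with hu
  have hupd : ∀ (w : (ι → A) → ℝ) (i : ι),
      avg (fun x => u i x * w x) = avg (fun x => w (Function.update x i b)) - avg w := by
    intro w i
    rw [avg_update, ← avg_sub]
    congr 1; funext x; simp only [hu]; ring
  set t : ι → ℝ := fun i => avg (fun x => φ (Function.update x i b)) - avg φ with ht
  have hu0 : ∀ i, avg (u i) = 0 := by
    intro i
    have := hupd (fun _ => 1) i
    simpa using this
  have huij : ∀ i j, avg (fun x => u i x * u j x) = if i = j then q - 1 else 0 := by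
    intro i j
    rw [hupd, hu0]
    split_ifs with h
    · subst h
      simp only [hu, Function.update_self, if_true, sub_zero, mul_one]
      rw [avg_const]
    · have : (fun x => u j (Function.update x i b)) = u j := by
        funext x; simp [hu, Function.update_of_ne (Ne.symm h)]
      rw [this, hu0, sub_zero]
  set X := ∑ i ∈ I, t i ^ 2 with hX
  set w : (ι → A) → ℝ := fun x => ∑ i ∈ I, t i * u i x with hw
  have hφw : avg (fun x => φ x * w x) = X := by
    simp only [hw, Finset.mul_sum]
    rw [avg_sum, hX]
    refine Finset.sum_congr rfl fun i _ => ?_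
    have : (fun x => φ x * (t i * u i x)) = fun x => t i • (u i x * φ x) := by
      funext x; simp; ring
    rw [this, avg_smul, hupd]; simp only [smul_eq_mul, ht]; ring
  have hww : avg (fun x => w x * w x) = (q - 1) * X := by
    simp only [hw, Finset.sum_mul_sum]
    rw [avg_sum, hX, Finset.mul_sum]
    refine Finset.sum_congr rfl fun i hi => ?_
    rw [avg_sum]
    have : ∀ j, avg (fun x => t i * u i x * (t j * u j x))
        = (t i * t j) * if i = j then q - 1 else 0 := by
      intro j
      rw [← huij, ← smul_eq_mul, ← avg_smul]
      congr 1; funext x; simp; ring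
    simp only [this]
    rw [Finset.sum_eq_single i]
    · simp; ring
    · intro j _ hj; simp [Ne.symm hj]
    · intro h; exact absurd hi h
  have havg_mono : ∀ h k : (ι → A) → ℝ, (∀ x, h x ≤ k x) → avg h ≤ avg k := by
    intro h k hk
    simp only [avg, smul_eq_mul]
    exact mul_le_mul_of_nonneg_left (Finset.sum_le_sum fun x _ => hk x) (by positivity)
  have main : avg (fun _ : ι → A => (0 : ℝ)) ≤
      avg (fun x => (C ^ 2 - (2 / q) • (φ x * w x)) - (-(1 / q) ^ 2) • (w x * w x)) := by
    apply havg_mono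
    intro x
    have h1 : φ x ^ 2 ≤ C ^ 2 := by
      have := hφ x
      exact sq_le_sq' (by linarith [neg_abs_le (φ x)]) (by linarith [le_abs_self (φ x)])
    simp only [smul_eq_mul]
    have : 0 ≤ (φ x - (1 / q) * w x) ^ 2 := sq_nonneg _
    have e : (φ x - (1 / q) * w x) ^ 2
      = φ x ^ 2 - 2 / q * (φ x * w x) - -(1 / q) ^ 2 * (w x * w x) := by ring
    linarith
  rw [avg_const, avg_sub, avg_sub, avg_const, avg_smul, avg_smul, hφw, hww] at main
  simp only [smul_eq_mul] at main
  have hXn : 0 ≤ X := Finset.sum_nonneg fun i _ => sq_nonneg _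
  have hq0 : 0 < q := by linarith
  have e : C ^ 2 - 2 / q * X - -(1 / q) ^ 2 * ((q - 1) * X) = C ^ 2 - X / q - X / q ^ 2 := by
    field_simp; ring
  rw [e] at main
  have : 0 ≤ X / q ^ 2 := by positivity
  have h3 : X / q ≤ C ^ 2 := by linarith
  rw [div_le_iff₀ hq0] at h3
  linarith

end Bessel


/-! ### Part 3: weak-star limits -/

section Weak

open Filter Topology

/-- the contragredient representation -/
noncomputable def conG {G : Type*} [Group G] {F : Type*} [NormedAddCommGroup F]
    [NormedSpace ℝ F] (ρ : G →* (F ≃ₗᵢ[ℝ] F)) : G →* Module.End ℝ (F →L[ℝ] ℝ) where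
  toFun g :=
    { toFun := contragredient ρ g
      map_add' := fun _ _ => rfl
      map_smul' := fun _ _ => rfl }
  map_one' := by
    ext φ v
    change φ (ρ 1⁻¹ v) = φ v
    simp
  map_mul' g h := by
    ext φ v
    change φ (ρ (g * h)⁻¹ v) = φ (ρ h⁻¹ (ρ g⁻¹ v))
    simp

theorem conG_apply {G : Type*} [Group G] {F : Type*} [NormedAddCommGroup F]
    [NormedSpace ℝ F] (ρ : G →* (F ≃ₗᵢ[ℝ] F)) (g : G) (φ : F →L[ℝ] ℝ) (v : F) :
    conG ρ g φ v = φ (ρ g⁻¹ v) := rfl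

theorem norm_conG {G : Type*} [Group G] {F : Type*} [NormedAddCommGroup F]
    [NormedSpace ℝ F] (ρ : G →* (F ≃ₗᵢ[ℝ] F)) (g : G) (φ : F →L[ℝ] ℝ) :
    ‖conG ρ g φ‖ = ‖φ‖ := by
  have key : ∀ (g : G) (φ : F →L[ℝ] ℝ), ‖conG ρ g φ‖ ≤ ‖φ‖ := by
    intro g φ
    refine ContinuousLinearMap.opNorm_le_bound _ (norm_nonneg _) fun v => ?_
    rw [conG_apply]
    simpa using φ.le_opNorm (ρ g⁻¹ v)
  refine le_antisymm (key g φ) ?_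
  have := key g⁻¹ (conG ρ g φ)
  rwa [← Module.End.mul_apply, ← map_mul, inv_mul_cancel, map_one, Module.End.one_apply] at this

theorem exists_ulim {F : Type*} [NormedAddCommGroup F] [NormedSpace ℝ F] {ι : Type*}
    (U : Ultrafilter ι) (e : ι → (F →L[ℝ] ℝ)) (C : ℝ) (hC : ∀ i, ‖e i‖ ≤ C) :
    ∃ L : F →L[ℝ] ℝ, ‖L‖ ≤ C ∧ ∀ v, Tendsto (fun i => e i v) U (𝓝 (L v)) := by
  have hK := WeakDual.isCompact_closedBall (𝕜 := ℝ) (E := F) 0 C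
  have hle : (U.map (fun i => StrongDual.toWeakDual (e i)) : Filter (WeakDual ℝ F))
      ≤ 𝓟 (WeakDual.toStrongDual ⁻¹' Metric.closedBall (0 : StrongDual ℝ F) C) := by
    rw [Filter.le_principal_iff]
    refine Ultrafilter.mem_coe.mpr (Ultrafilter.mem_map.mpr (Filter.univ_mem' fun i => ?_))
    simpa using hC i
  obtain ⟨L, hL, hl⟩ := hK.ultrafilter_le_nhds _ hle
  refine ⟨WeakDual.toStrongDual L, by simpa using hL, fun v => ?_⟩
  have h1 : Tendsto (fun i => StrongDual.toWeakDual (e i)) U (𝓝 L) := hl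
  exact ((WeakDual.eval_continuous v).tendsto L).comp h1

/-- Point of weak-star to norm continuity, in separable duals. -/
theorem pcp {F : Type*} [NormedAddCommGroup F] [NormedSpace ℝ F]
    [TopologicalSpace.SeparableSpace (F →L[ℝ] ℝ)] {P J : Type*} [Finite J] [Nonempty P]
    (M : P → J → (F →L[ℝ] ℝ)) (C : ℝ) (hC : ∀ p σ, ‖M p σ‖ ≤ C) (ε : ℝ) (hε : 0 < ε) :
    ∃ p, ∀ (l : Filter ℕ) (q : ℕ → P),
      (∀ σ v, Tendsto (fun i => M (q i) σ v) l (𝓝 (M p σ v))) →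
      ∀ᶠ i in l, ∀ σ, ‖M (q i) σ - M p σ‖ ≤ ε := by
  classical
  let W : P → J → WeakDual ℝ F := fun p σ => StrongDual.toWeakDual (M p σ)
  let Bl : Set (WeakDual ℝ F) := WeakDual.toStrongDual ⁻¹' Metric.closedBall (0 : StrongDual ℝ F) C
  let K : Set (J → WeakDual ℝ F) := closure (Set.range W)
  have hBl : IsCompact (Set.univ.pi fun _ : J => Bl) :=
    isCompact_univ_pi fun _ => WeakDual.isCompact_closedBall (𝕜 := ℝ) (E := F) 0 C
  have hsub : K ⊆ Set.univ.pi fun _ : J => Bl := by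
    apply closure_minimal _ hBl.isClosed
    rintro _ ⟨p, rfl⟩ σ _
    simpa [W, Bl] using hC p σ
  have hKc : IsCompact K := hBl.of_isClosed_subset isClosed_closure hsub
  haveI : CompactSpace K := isCompact_iff_compactSpace.mp hKc
  haveI : Nonempty K := ⟨⟨W (Classical.arbitrary P), subset_closure ⟨_, rfl⟩⟩⟩
  let d := TopologicalSpace.denseSeq (F →L[ℝ] ℝ)
  let B : (J → ℕ) → Set K := fun e =>
    {φ | ∀ σ, WeakDual.toStrongDual (φ.1 σ) ∈ Metric.closedBall (d (e σ)) (ε / 2)}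
  have hcl : ∀ e, IsClosed (B e) := by
    intro e
    have : B e = ⋂ σ, (fun φ : K => φ.1 σ) ⁻¹'
        (WeakDual.toStrongDual ⁻¹' Metric.closedBall (d (e σ)) (ε / 2)) := by
      ext φ; simp [B]
    rw [this]
    refine isClosed_iInter fun σ => ?_
    exact (WeakDual.isClosed_closedBall (d (e σ)) (ε / 2)).preimage
      ((continuous_apply σ).comp continuous_subtype_val)
  have hun : ⋃ e, B e = Set.univ := by
    rw [Set.eq_univ_iff_forall]
    intro φ
    have : ∀ σ, ∃ k, dist (WeakDual.toStrongDual (φ.1 σ)) (d k) < ε / 2 := by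
      intro σ
      exact (TopologicalSpace.denseRange_denseSeq (F →L[ℝ] ℝ)).exists_dist_lt _ (by positivity)
    choose e he using this
    exact Set.mem_iUnion.mpr ⟨e, fun σ => (he σ).le⟩
  obtain ⟨e, he⟩ := nonempty_interior_of_iUnion_of_closed hcl hun
  obtain ⟨φ, hφ⟩ := he
  obtain ⟨O, hO, hOe⟩ := isOpen_induced_iff.mp (isOpen_interior (s := B e))
  have hφO : φ.1 ∈ O := by
    have : φ ∈ Subtype.val ⁻¹' O := by rw [hOe]; exact hφ
    exact this
  obtain ⟨_, hpO, ⟨p, rfl⟩⟩ := mem_closure_iff.mp φ.2 O hO hφO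
  have hin : ∀ r : P, W r ∈ O → ∀ σ, dist (M r σ) (d (e σ)) ≤ ε / 2 := by
    intro r hr σ
    have h1 : (⟨W r, subset_closure ⟨r, rfl⟩⟩ : K) ∈ Subtype.val ⁻¹' O := hr
    rw [hOe] at h1
    exact interior_subset h1 σ
  refine ⟨p, fun l q hq => ?_⟩
  have hT : Tendsto (fun i => W (q i)) l (𝓝 (W p)) := by
    rw [tendsto_pi_nhds]
    intro σ
    rw [tendsto_iff_forall_eval_tendsto_topDualPairing]
    intro v
    exact hq σ v
  filter_upwards [hT (hO.mem_nhds hpO)] with i hi σ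
  rw [← dist_eq_norm]
  have a1 := hin _ hi σ
  have a2 := hin _ hpO σ
  have := dist_triangle_right (M (q i) σ) (M p σ) (d (e σ))
  linarith

end Weak


/-! ### Part 4: the core approximation -/

section Core

open Filter Topology

theorem avg_apply {Ω F : Type*} [Fintype Ω] [NormedAddCommGroup F] [NormedSpace ℝ F]
    (h : Ω → (F →L[ℝ] ℝ)) (v : F) : (avg h) v = avg (fun ω => h ω v) := by
  simp [avg]

/-- sequence obtained from a condition `p` and a random sample `x` -/
noncomputable def ov {A : Type*} [Nonempty A] (p : ℕ → Option A) (N : ℕ) (x : Fin N → A) : ℕ → A :=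
  fun l => (p l).getD (if h : l < N then x ⟨l, h⟩ else Classical.arbitrary A)

theorem ov_update {A : Type*} [Nonempty A] (p : ℕ → Option A) (N : ℕ) (x : Fin N → A) (i : Fin N)
    (b : A) (hp : p i = none) :
    ov (Function.update p i (some b)) N x = ov p N (Function.update x i b) := by
  funext l
  by_cases h : l = i
  · subst h; simp [ov, hp]
  · simp only [ov, Function.update_of_ne h]
    congr 1
    split_ifs with hl
    · rw [Function.update_of_ne]
      intro h'; apply h; rw [← h']
    · rfl

theorem conditions {F : Type*} [NormedAddCommGroup F] [NormedSpace ℝ F]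
    [TopologicalSpace.SeparableSpace (F →L[ℝ] ℝ)] {A J : Type*} [Fintype A] [Nonempty A]
    [Finite J] (Θ : ℕ → (ℕ → A) → J → (F →L[ℝ] ℝ)) (C : ℝ) (hC : ∀ N a σ, ‖Θ N a σ‖ ≤ C)
    (U : Ultrafilter ℕ) (hU : (U : Filter ℕ) ≤ atTop) (ε : ℝ) (hε : 0 < ε) :
    ∃ (p : ℕ → Option A) (i : ℕ) (c : J → (F →L[ℝ] ℝ)) (L : A → J → (F →L[ℝ] ℝ)),
      ∀ b σ, ‖L b σ - c σ‖ ≤ ε ∧ ∀ v, Tendsto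
        (fun N => (avg (fun x : Fin N → A =>
          Θ N (ov (Function.update p i (some b)) N x) σ)) v) U (𝓝 (L b σ v)) := by
  classical
  let P := {p : ℕ → Option A // {l | p l ≠ none}.Finite}
  haveI : Nonempty P := ⟨⟨fun _ => none, by simp⟩⟩
  have hex : ∀ (p : P) (σ : J), ∃ L : F →L[ℝ] ℝ, ‖L‖ ≤ C ∧ ∀ v, Tendsto
        (fun N => (avg (fun x : Fin N → A => Θ N (ov p.1 N x) σ)) v) U (𝓝 (L v)) := by
    intro p σ
    apply exists_ulim
    intro N
    exact norm_avg_le _ _ fun x => hC _ _ _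
  choose M hM1 hM2 using hex
  obtain ⟨p, hp⟩ := pcp M C hM1 ε hε
  have hfin : ∀ i (b : A), {l | Function.update p.1 i (some b) l ≠ none}.Finite := by
    intro i b
    refine (p.2.union (Set.finite_singleton i)).subset fun l hl => ?_
    by_cases h : l = i
    · right; exact h
    · left
      simpa [Function.update_of_ne h] using hl
  let q : A → ℕ → P := fun b i => ⟨Function.update p.1 i (some b), hfin i b⟩
  have hbes : ∀ (b : A) (σ : J) (v : F) (I : Finset ℕ), (∀ i ∈ I, p.1 i = none) →
      ∑ i ∈ I, (M (q b i) σ v - M p σ v) ^ 2 ≤ Fintype.card A * (C * ‖v‖) ^ 2 := by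
    intro b σ v I hI
    have ht : Tendsto (fun N => ∑ i ∈ I,
        ((avg (fun x : Fin N → A => Θ N (ov (q b i).1 N x) σ)) v
          - (avg (fun x : Fin N → A => Θ N (ov p.1 N x) σ)) v) ^ 2) U
        (𝓝 (∑ i ∈ I, (M (q b i) σ v - M p σ v) ^ 2)) :=
      tendsto_finsetSum _ fun i _ => ((hM2 (q b i) σ v).sub (hM2 p σ v)).pow 2
    refine le_of_tendsto ht (hU ?_)
    filter_upwards [eventually_gt_atTop (I.sup id)] with N hN
    have hIN : ∀ i ∈ I, i < N := fun i hi =>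
      lt_of_le_of_lt (Finset.le_sup (f := id) hi) hN
    have hb := bessel (fun x : Fin N → A => Θ N (ov p.1 N x) σ v) (C * ‖v‖) (by
      intro x
      exact ((Θ N (ov p.1 N x) σ).le_opNorm v).trans
        (mul_le_mul_of_nonneg_right (hC _ _ _) (norm_nonneg _))) (I.attachFin hIN) b
    refine le_trans (le_of_eq ?_) hb
    have hmap : I = (I.attachFin hIN).map Fin.valEmbedding :=
      (Finset.map_valEmbedding_attachFin hIN).symm
    conv_lhs => rw [hmap]
    rw [Finset.sum_map]
    refine Finset.sum_congr rfl fun i hi => ?_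
    have hi' : (i : ℕ) ∈ I := by simpa [Finset.mem_attachFin] using hi
    simp only [avg_apply]
    congr 2
    congr 1
    funext x
    have := ov_update p.1 N x i b (hI _ hi')
    simp only [q, Fin.valEmbedding_apply]
    rw [this]
  have htend : ∀ (b : A) (σ : J) (v : F),
      Tendsto (fun i => M (q b i) σ v) cofinite (𝓝 (M p σ v)) := by
    intro b σ v
    let r : ℕ → ℝ := fun i => if p.1 i = none then (M (q b i) σ v - M p σ v) ^ 2 else 0
    have hs : Summable r := by
      refine summable_of_sum_le (c := Fintype.card A * (C * ‖v‖) ^ 2) ?_ ?_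
      · intro i; simp only [r]; split_ifs <;> positivity
      · intro u
        simp only [r]
        rw [← Finset.sum_filter]
        exact hbes b σ v _ fun i hi => (Finset.mem_filter.mp hi).2
    have h0 := hs.tendsto_cofinite_zero
    have h1 : Tendsto (fun i => (M (q b i) σ v - M p σ v) ^ 2) cofinite (𝓝 0) := by
      refine h0.congr' ?_
      have : ∀ᶠ i in cofinite, p.1 i = none := by
        have := p.2
        exact this
      filter_upwards [this] with i hi
      simp [r, hi]
    have h2 : Tendsto (fun i => |M (q b i) σ v - M p σ v|) cofinite (𝓝 0) := by
      have := (Real.continuous_sqrt.tendsto 0).comp h1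
      simpa [Function.comp_def, Real.sqrt_sq_eq_abs] using this
    have h3 := (tendsto_zero_iff_abs_tendsto_zero _).mpr h2
    simpa using h3.add_const (M p σ v)
  have hev : ∀ᶠ i in cofinite, ∀ b : A, ∀ σ, ‖M (q b i) σ - M p σ‖ ≤ ε := by
    rw [Filter.eventually_all]
    intro b
    exact hp cofinite (q b) (htend b)
  obtain ⟨i, hi⟩ := hev.exists
  exact ⟨p.1, i, M p, fun b => M (q b i), fun b σ => ⟨hi b σ, hM2 (q b i) σ⟩⟩

/-- product of conjugates -/
def sprod {G : Type*} [Group G] (s : G) : ℕ → (ℕ → G) → G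
  | 0, _ => 1
  | N + 1, a => sprod s N a * (s ^ N * a N * (s ^ N)⁻¹)

theorem sprod_congr {G : Type*} [Group G] (s : G) (N : ℕ) (a a' : ℕ → G)
    (h : ∀ l < N, a l = a' l) : sprod s N a = sprod s N a' := by
  induction N with
  | zero => rfl
  | succ N ih =>
    simp only [sprod]
    rw [ih fun l hl => h l (by omega), h N (by omega)]

theorem sprod_commute {G : Type*} [Group G] (s : G) (N : ℕ) (a : ℕ → G) (x : G)
    (h : ∀ l < N, Commute x (s ^ l * a l * (s ^ l)⁻¹)) : Commute x (sprod s N a) := by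
  induction N with
  | zero => exact Commute.one_right _
  | succ N ih => exact (ih fun l hl => h l (by omega)).mul_right (h N (by omega))

theorem sprod_update {G : Type*} [Group G] (s : G) (N i : ℕ) (hi : i < N) (a : ℕ → G) (g : G)
    (h : ∀ l, l ≠ i → Commute (s ^ i * g * (s ^ i)⁻¹) (s ^ l * a l * (s ^ l)⁻¹)) :
    sprod s N (Function.update a i g)
      = (s ^ i * g * (s ^ i)⁻¹) * sprod s N (Function.update a i 1) := by
  induction N with
  | zero => omega
  | succ N ih =>
    simp only [sprod]
    by_cases hN : i = N
    · subst hN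
      rw [sprod_congr s i (Function.update a i g) a
          (fun l hl => Function.update_of_ne (by omega) _ _),
        sprod_congr s i (Function.update a i 1) a
          (fun l hl => Function.update_of_ne (by omega) _ _)]
      simp only [Function.update_self]
      have := sprod_commute s i a _ (fun l hl => h l (by omega))
      rw [← this.eq]; simp
    · rw [ih (by omega), Function.update_of_ne (Ne.symm hN), Function.update_of_ne (Ne.symm hN)]
      simp only [mul_assoc]

theorem core {G F : Type*} [Group G] [NormedAddCommGroup F] [NormedSpace ℝ F]
    [TopologicalSpace.SeparableSpace (F →L[ℝ] ℝ)] (ρ : G →* (F ≃ₗᵢ[ℝ] F)) {n : ℕ}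
    (Φ : (Fin (n + 1) → G) → (F →L[ℝ] ℝ))
    (hcoc : ∀ w, homDelta Φ w = 0) (heq : ∀ h y, Φ (fun j => h * y j) = conG ρ h (Φ y))
    (C : ℝ) (hC : ∀ y, ‖Φ y‖ ≤ C) (s : G) (S : Finset G) (h1 : 1 ∈ S)
    (hcomm : ∀ a ∈ S, ∀ b ∈ S, ∀ i j : ℕ, i ≠ j →
      Commute (s ^ i * a * (s ^ i)⁻¹) (s ^ j * b * (s ^ j)⁻¹)) (ε : ℝ) (hε : 0 < ε) :
    ∃ (b : (Fin n → G) → (F →L[ℝ] ℝ)) (c : F →L[ℝ] ℝ),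
      (∀ h y, b (fun j => h * y j) = conG ρ h (b y)) ∧ (∀ y, ‖b y‖ ≤ n * C) ∧
      ∀ g, (∀ k, g k ∈ S) → ‖Φ g + homDelta b g - c‖ ≤ ε := by
  classical
  let A := Fin (n + 1) → S
  haveI : Nonempty S := ⟨⟨1, h1⟩⟩
  let one : A := fun _ => ⟨1, h1⟩
  let U : Ultrafilter ℕ := hyperfilter ℕ
  have hU : (U : Filter ℕ) ≤ atTop := by
    have := hyperfilter_le_cofinite (α := ℕ)
    rwa [Nat.cofinite_eq_atTop] at this
  let J := Equiv.Perm (Fin (n + 1))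
  let Θ : ℕ → (ℕ → A) → J → (F →L[ℝ] ℝ) := fun N a σ =>
    Φ (fun k => sprod s N (fun l => (a l (σ k) : G)))
  obtain ⟨p, i, c, L, hL⟩ := conditions Θ C (fun _ _ _ => hC _) U hU ε hε
  let ψ : ∀ N : ℕ, (Fin N → A) → Fin (n + 1) → G := fun N x k =>
    (s ^ i)⁻¹ * sprod s N (fun l => (ov (Function.update p i (some one)) N x l k : G))
  have hsm := fun N => smoothing (conG ρ) Φ hcoc heq C hC (Fin N → A) (ψ N)
  choose bN hb1 hb2 hb3 using hsm
  have hlim := fun g => exists_ulim U (fun N => bN N g) (n * C) (fun N => hb2 N g)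
  choose b hbn hbt using hlim
  refine ⟨b, conG ρ (s ^ i)⁻¹ (avg c), ?_, hbn, ?_⟩
  · intro h y
    ext v
    refine tendsto_nhds_unique (hbt (fun j => h * y j) v) ?_
    simp only [hb1, conG_apply]
    exact hbt y _
  · intro g hg
    have hdl : ∀ v, Tendsto (fun N => (Φ g + homDelta (bN N) g) v) U
        (𝓝 ((Φ g + homDelta b g) v)) := by
      intro v
      simp only [ContinuousLinearMap.add_apply, homDelta, ContinuousLinearMap.sum_apply,
        ContinuousLinearMap.smul_apply]
      exact tendsto_const_nhds.add (tendsto_finsetSum _ fun j _ => (hbt _ v).const_smul _)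
    let gs : J → A := fun σ k => ⟨g (σ⁻¹ k), hg _⟩
    have hK : ∀ N, i < N → Φ g + homDelta (bN N) g = conG ρ (s ^ i)⁻¹ (avg (fun σ : J =>
        avg (fun x : Fin N → A => Θ N (ov (Function.update p i (some (gs σ))) N x) σ))) := by
      intro N hN
      rw [← hb3 N g, add_sub_cancel,
        avg_prod (fun (x : Fin N → A) (σ : J) => Φ (fun k => g k * ψ N x (σ k)))]
      simp only [avg_map]
      congr 1
      funext σ
      congr 1
      funext x
      simp only [Θ]
      rw [← heq]
      congr 1
      funext k
      simp only [ψ]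
      have e1 : ∀ t : A, (fun l => (ov (Function.update p i (some t)) N x l (σ k) : G))
          = Function.update (fun l => (ov p N x l (σ k) : G)) i (t (σ k)) := by
        intro t
        funext l
        by_cases hl : l = i
        · subst hl; simp [ov]
        · simp [ov, Function.update_of_ne hl]
      rw [e1, e1]
      have e2 := sprod_update s N i hN (fun l => (ov p N x l (σ k) : G)) (g k) (by
        intro l hl
        exact hcomm _ (hg k) _ (ov p N x l (σ k)).2 _ _ (Ne.symm hl))
      have e3 : ((gs σ (σ k) : S) : G) = g k := by
        change g ((σ : Equiv.Perm (Fin (n + 1)))⁻¹ (σ k)) = g k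
        exact congrArg g (Equiv.symm_apply_apply _ _)
      rw [e3, e2]
      simp [one, mul_assoc]
    have hlimK : Φ g + homDelta b g = conG ρ (s ^ i)⁻¹ (avg (fun σ : J => L (gs σ) σ)) := by
      ext v
      refine tendsto_nhds_unique (hdl v) ?_
      have : Tendsto (fun N => (conG ρ (s ^ i)⁻¹ (avg (fun σ : J => avg (fun x : Fin N → A =>
          Θ N (ov (Function.update p i (some (gs σ))) N x) σ)))) v) U
          (𝓝 ((conG ρ (s ^ i)⁻¹ (avg (fun σ : J => L (gs σ) σ))) v)) := by
        simp only [conG_apply]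
        rw [avg_apply]
        have e : ∀ N, (avg (fun σ : J => avg (fun x : Fin N → A =>
          Θ N (ov (Function.update p i (some (gs σ))) N x) σ))) (ρ ((s ^ i)⁻¹)⁻¹ v)
          = avg (fun σ : J => (avg (fun x : Fin N → A =>
          Θ N (ov (Function.update p i (some (gs σ))) N x) σ)) (ρ ((s ^ i)⁻¹)⁻¹ v)) :=
          fun N => avg_apply _ _
        simp only [e]
        unfold avg
        refine Tendsto.const_smul (tendsto_finsetSum _ fun σ _ => ?_) _
        exact (hL (gs σ) σ).2 _
      refine this.congr' (hU ?_)
      filter_upwards [eventually_gt_atTop i] with N hN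
      rw [hK N hN]
    rw [hlimK, ← map_sub, norm_conG, ← avg_sub]
    exact norm_avg_le _ _ fun σ => (hL (gs σ) σ).1

end Core


/-! ### Part 5: assembling -/

section Final

open Filter Topology
open scoped Pointwise

theorem exists_commuting {G Z : Type*} [Group G] [MulAction G Z] [FaithfulSMul G Z]
    (Z₀ : Set Z) (g : G)
    (hconj : ∀ S : Finset G, ∃ t : G, ∀ h ∈ S, ∀ z : Z, z ∉ Z₀ → (t * h * t⁻¹) • z = z)
    (hdisj : ∀ p : ℤ, 1 ≤ p → Disjoint (g ^ p • Z₀) Z₀) (S : Finset G) :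
    ∃ s : G, ∀ a ∈ S, ∀ b ∈ S, ∀ i j : ℕ, i ≠ j →
      Commute (s ^ i * a * (s ^ i)⁻¹) (s ^ j * b * (s ^ j)⁻¹) := by
  obtain ⟨t, ht⟩ := hconj S
  -- commuting of elements with disjoint supports
  have comm0 : ∀ (A B : Set Z) (x y : G), Disjoint A B → (∀ z, z ∉ A → x • z = z) →
      (∀ z, z ∉ B → y • z = z) → Commute x y := by
    intro A B x y hAB hx hy
    have hxA : ∀ z, z ∈ A → x • z ∈ A := by
      intro z hz
      by_contra h
      have h1 := hx _ h
      have h2 : x • z = z := smul_left_cancel x h1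
      rw [h2] at h
      exact h hz
    have hyB : ∀ z, z ∈ B → y • z ∈ B := by
      intro z hz
      by_contra h
      have h1 := hy _ h
      have h2 : y • z = z := smul_left_cancel y h1
      rw [h2] at h
      exact h hz
    refine eq_of_smul_eq_smul (α := Z) fun z => ?_
    rw [mul_smul, mul_smul]
    by_cases hA : z ∈ A
    · have hB := Set.disjoint_left.mp hAB hA
      rw [hy z hB, hy _ (Set.disjoint_left.mp hAB (hxA z hA))]
    · rw [hx z hA]
      by_cases hB : z ∈ B
      · rw [hx _ (Set.disjoint_right.mp hAB (hyB z hB))]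
      · rw [hy z hB, hx z hA]
  have supp : ∀ a ∈ S, ∀ i : ℕ, ∀ z, z ∉ (g ^ i) • Z₀ →
      (g ^ i * (t * a * t⁻¹) * (g ^ i)⁻¹) • z = z := by
    intro a ha i z hz
    have h1 : (g ^ i)⁻¹ • z ∉ Z₀ := by
      intro h
      exact hz (Set.mem_smul_set_iff_inv_smul_mem.mpr h)
    have h2 := ht a ha _ h1
    rw [mul_smul, mul_smul, h2, smul_inv_smul]
  have dis : ∀ i j : ℕ, i < j → Disjoint ((g ^ i) • Z₀) ((g ^ j) • Z₀) := by
    intro i j hij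
    have h1 := hdisj ((j : ℤ) - i) (by omega)
    have h2 : g ^ j = g ^ i * g ^ ((j : ℤ) - i) := by
      rw [← zpow_natCast g i, ← zpow_add, add_sub_cancel, zpow_natCast]
    rw [h2, mul_smul, Set.disjoint_smul_set]
    exact h1.symm
  have main : ∀ a ∈ S, ∀ b ∈ S, ∀ i j : ℕ, i ≠ j →
      Commute (g ^ i * (t * a * t⁻¹) * (g ^ i)⁻¹) (g ^ j * (t * b * t⁻¹) * (g ^ j)⁻¹) := by
    intro a ha b hb i j hij
    refine comm0 _ _ _ _ ?_ (supp a ha i) (supp b hb j)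
    rcases lt_or_gt_of_ne hij with h | h
    · exact dis i j h
    · exact (dis j i h).symm
  refine ⟨t⁻¹ * g * t, fun a ha b hb i j hij => ?_⟩
  have hpow : ∀ k : ℕ, (t⁻¹ * g * t) ^ k = t⁻¹ * g ^ k * t := by
    intro k
    have := conj_pow (i := k) (a := t⁻¹) (b := g)
    rwa [inv_inv] at this
  have hrw : ∀ (k : ℕ) (a : G), (t⁻¹ * g * t) ^ k * a * ((t⁻¹ * g * t) ^ k)⁻¹
      = t⁻¹ * (g ^ k * (t * a * t⁻¹) * (g ^ k)⁻¹) * t⁻¹⁻¹ := by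
    intro k a
    rw [hpow]; group
  rw [hrw, hrw]
  exact (Commute.conj_iff t⁻¹).mpr (main a ha b hb i j hij)

theorem norm_homDelta_le {X E : Type*} [NormedAddCommGroup E] [NormedSpace ℝ E] {m : ℕ}
    (h : (Fin m → X) → E) (D : ℝ) (hD : ∀ y, ‖h y‖ ≤ D) (y : Fin (m + 1) → X) :
    ‖homDelta h y‖ ≤ (m + 1) * D := by
  unfold homDelta
  refine (norm_sum_le_of_le _ (f := fun j : Fin (m + 1) => ((-1 : ℝ) ^ (j : ℕ)) •
    h (fun k => y (j.succAbove k))) (n := fun _ => D) fun j _ => ?_).trans ?_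
  · rw [norm_smul]; simpa using hD _
  · simp

theorem sum_alt (m : ℕ) :
    ∑ j : Fin m, (-1 : ℝ) ^ (j : ℕ) = if Even m then 0 else 1 := by
  rw [Fin.sum_univ_eq_sum_range (fun j => (-1 : ℝ) ^ j) m]
  exact neg_one_geom_sum

theorem homDelta_const {X E : Type*} [NormedAddCommGroup E] [NormedSpace ℝ E] {m : ℕ}
    (h : (Fin m → X) → E) (x : X) :
    homDelta h (fun _ => x) = (if Even (m + 1) then (0 : ℝ) else 1) • h (fun _ => x) := by
  unfold homDelta
  rw [← Finset.sum_smul, sum_alt]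

theorem homDelta_equiv {G : Type*} [Group G] {E : Type*} [AddCommGroup E] [Module ℝ E]
    (π : G →* Module.End ℝ E) {m : ℕ} (b : (Fin m → G) → E)
    (hb : ∀ h y, b (fun j => h * y j) = π h (b y)) (h : G) (y : Fin (m + 1) → G) :
    homDelta b (fun j => h * y j) = π h (homDelta b y) := by
  unfold homDelta
  simp only [map_sum, map_smul]
  refine Finset.sum_congr rfl fun j _ => ?_
  rw [← hb]

theorem bddDelta_const {G : Type*} [Group G] {E : Type*} [NormedAddCommGroup E] [NormedSpace ℝ E]
    (π : G →* Module.End ℝ E) {n : ℕ} (hn : ¬ Even n) (c : E) (g : Fin (n + 1) → G) :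
    bddDelta (fun g => π g) n (fun _ => c) g = π (g 0) c := by
  unfold bddDelta
  rw [add_assoc, ← Finset.sum_smul, ← add_smul]
  have h1 := sum_alt (n + 2)
  have hn2 : ¬ Even (n + 2) := by simpa [Nat.even_add] using hn
  rw [if_neg hn2, Fin.sum_univ_succ, Fin.sum_univ_castSucc] at h1
  simp only [Fin.val_zero, pow_zero, Fin.val_succ, Fin.val_castSucc, Fin.val_last] at h1
  have h2 : (∑ i : Fin n, (-1 : ℝ) ^ ((i : ℕ) + 1)) + (-1) ^ (n + 1) = 0 := by linarith
  rw [h2, zero_smul, add_zero]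

theorem bddDelta_sub {G : Type*} [Group G] {E : Type*} [NormedAddCommGroup E] [NormedSpace ℝ E]
    (π : G →* Module.End ℝ E) {n : ℕ} (b c : (Fin n → G) → E) (g : Fin (n + 1) → G) :
    bddDelta (fun g => π g) n (fun x => b x - c x) g
      = bddDelta (fun g => π g) n b g - bddDelta (fun g => π g) n c g := by
  unfold bddDelta
  simp only [map_sub, smul_sub, Finset.sum_sub_distrib]
  abel

theorem approx_primitive {G F : Type*} [Group G] [NormedAddCommGroup F] [NormedSpace ℝ F]
    [TopologicalSpace.SeparableSpace (F →L[ℝ] ℝ)] (ρ : G →* (F ≃ₗᵢ[ℝ] F))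
    (hG : ∀ S : Finset G, ∃ s : G, ∀ a ∈ S, ∀ b ∈ S, ∀ i j : ℕ, i ≠ j →
      Commute (s ^ i * a * (s ^ i)⁻¹) (s ^ j * b * (s ^ j)⁻¹)) {n : ℕ}
    (f : (Fin (n + 1) → G) → (F →L[ℝ] ℝ)) (C : ℝ) (hC : ∀ g, ‖f g‖ ≤ C)
    (hf : bddDelta (fun g => conG ρ g) (n + 1) f = 0) (T : Finset G) (ε : ℝ) (hε : 0 < ε)
    (hε1 : ε ≤ 1) :
    ∃ b : (Fin n → G) → (F →L[ℝ] ℝ),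
      (∀ x, ‖b x‖ ≤ C + (n + 2) * ((n + 1) * C) + 1 + (n + 1) * C) ∧
      ∀ g, (∀ k, g k ∈ T) → ‖f g - bddDelta (fun g => conG ρ g) n b g‖ ≤ 3 * ε := by
  classical
  have hC0 : 0 ≤ C := (norm_nonneg _).trans (hC (fun _ => 1))
  let S : Finset G := insert 1 (T ∪ ((Fintype.piFinset (fun _ : Fin (n + 1) => T)) ×ˢ
    (Finset.univ : Finset (Fin (n + 2)))).image (fun p => pprod p.1 p.2))
  have h1S : (1 : G) ∈ S := Finset.mem_insert_self _ _
  have hTS : ∀ x ∈ T, x ∈ S := fun x hx =>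
    Finset.mem_insert_of_mem (Finset.mem_union_left _ hx)
  have hpS : ∀ g : Fin (n + 1) → G, (∀ k, g k ∈ T) → ∀ j, pprod g j ∈ S := by
    intro g hg j
    refine Finset.mem_insert_of_mem (Finset.mem_union_right _ (Finset.mem_image.mpr
      ⟨(g, j), ?_, rfl⟩))
    simp [hg]
  obtain ⟨s, hs⟩ := hG S
  let Φ := homog (conG ρ) f
  have hcoc : ∀ w, homDelta Φ w = 0 := by
    intro w
    rw [homDelta_homog, hf]
    simp
  have hΦn : ∀ y, ‖Φ y‖ ≤ C := by
    intro y
    simp only [Φ, homog, norm_conG]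
    exact hC _
  obtain ⟨bh, c, hb1, hb2, hb3⟩ := core ρ Φ hcoc (homog_equiv _ f) C hΦn s S h1S hs ε hε
  push_cast at hb2
  have hK1 := hb3 (fun _ => 1) (fun _ => h1S)
  have hfg : ∀ g, f g = (Φ (pprod g) + homDelta bh (pprod g))
      - bddDelta (fun g => conG ρ g) n (fun g => bh (pprod g)) g := by
    intro g
    rw [bddDelta_of_hom (conG ρ) bh hb1, add_sub_cancel_right]
    exact (homog_pprod _ _ _).symm
  have hnn : 0 ≤ (n + 2 : ℝ) * ((n + 1) * C) := by positivity
  by_cases hn : Even n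
  · have z1 : Φ (fun _ => 1) = 0 := by
      have := hcoc (fun _ => 1)
      rw [homDelta_const] at this
      have hne : ¬ Even (n + 1 + 1 + 1) := by simp [Nat.even_add_one, hn]
      rwa [if_neg hne, one_smul] at this
    have z2 : homDelta bh (fun _ => 1) = 0 := by
      rw [homDelta_const, if_pos (by simp [Nat.even_add_one, hn]), zero_smul]
    rw [z1, z2, add_zero, zero_sub, norm_neg] at hK1
    refine ⟨fun x => 0 - bh (pprod x), fun x => ?_, fun g hg => ?_⟩
    · simp only [zero_sub, norm_neg]
      have := hb2 (pprod x)
      linarith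
    · have e0 : bddDelta (fun g => conG ρ g) n (fun _ => (0 : F →L[ℝ] ℝ)) g = 0 := by
        simp [bddDelta]
      rw [bddDelta_sub (conG ρ) (fun _ => 0), e0, hfg g]
      have := hb3 _ (hpS g hg)
      have e : ∀ K B : F →L[ℝ] ℝ, K - B - (0 - B) = (K - c) + c := by intros; abel
      rw [e]
      refine (norm_add_le _ _).trans ?_
      linarith
  · refine ⟨fun x => c - bh (pprod x), fun x => ?_, fun g hg => ?_⟩
    · have a1 := hb2 (pprod x)
      have a2 := norm_homDelta_le bh _ hb2 (fun _ => 1)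
      have a3 := hΦn (fun _ => 1)
      have a4 : ‖c‖ ≤ ‖Φ (fun _ => 1)‖ + ‖homDelta bh (fun _ => 1)‖ + ε := by
        have : c = (Φ (fun _ => 1) + homDelta bh (fun _ => 1))
          - (Φ (fun _ => 1) + homDelta bh (fun _ => 1) - c) := by abel
        calc ‖c‖ = ‖(Φ (fun _ => 1) + homDelta bh (fun _ => 1))
              - (Φ (fun _ => 1) + homDelta bh (fun _ => 1) - c)‖ := by rw [← this]
          _ ≤ _ := (norm_sub_le _ _).trans (add_le_add (norm_add_le _ _) hK1)
      have a5 := norm_sub_le c (bh (pprod x))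
      push_cast at a2
      have : (n + 1 + 1 : ℝ) * ((n + 1) * C) = (n + 2) * ((n + 1) * C) := by ring
      linarith
    · rw [bddDelta_sub (conG ρ) (fun _ => c), bddDelta_const (conG ρ) hn, hfg g]
      have k1 := hb3 _ (hpS g hg)
      have k2 := hb3 (fun _ => g 0) (fun _ => hTS _ (hg 0))
      have k3 : Φ (fun _ => g 0) + homDelta bh (fun _ => g 0)
          = conG ρ (g 0) (Φ (fun _ => 1) + homDelta bh (fun _ => 1)) := by
        rw [map_add]
        have q1 := homog_equiv (conG ρ) f (g 0) (fun _ => 1)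
        have q2 := homDelta_equiv (conG ρ) bh hb1 (g 0) (fun _ => 1)
        simp only [mul_one] at q1 q2
        rw [q2]
        congr 1
      rw [k3] at k2
      rw [← norm_conG ρ (g 0), map_sub] at hK1
      have e : ∀ K B D M : F →L[ℝ] ℝ, K - B - (D - B) = (K - c) + -(M - c) + (M - D) := by
        intros; abel
      rw [e _ _ _ (conG ρ (g 0) (Φ (fun _ => 1) + homDelta bh (fun _ => 1)))]
      refine (norm_add₃_le).trans ?_
      rw [norm_neg]
      linarith

theorem vanish_of_commuting {G F : Type*} [Group G] [NormedAddCommGroup F] [NormedSpace ℝ F]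
    [TopologicalSpace.SeparableSpace (F →L[ℝ] ℝ)] (ρ : G →* (F ≃ₗᵢ[ℝ] F))
    (hG : ∀ S : Finset G, ∃ s : G, ∀ a ∈ S, ∀ b ∈ S, ∀ i j : ℕ, i ≠ j →
      Commute (s ^ i * a * (s ^ i)⁻¹) (s ^ j * b * (s ^ j)⁻¹)) :
    HbVanish (contragredient ρ) := by
  classical
  rintro n f ⟨C, hC⟩ hf
  have hap := fun q : Finset G × ℕ => approx_primitive ρ hG f C hC hf q.1 (1 / ((q.2 : ℝ) + 1))
    (by positivity) (by rw [div_le_one (by positivity)]; linarith [(Nat.cast_nonneg q.2 : (0:ℝ) ≤ q.2)])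
  choose bq hb1 hb2 using hap
  let U : Ultrafilter (Finset G × ℕ) := Ultrafilter.of atTop
  have hU : (U : Filter (Finset G × ℕ)) ≤ atTop := Ultrafilter.of_le _
  have hlim := fun x => exists_ulim U (fun q => bq q x) _ (fun q => hb1 q x)
  choose b hbn hbt using hlim
  refine ⟨b, ⟨_, hbn⟩, ?_⟩
  funext g
  ext v
  have t1 : Tendsto (fun q => (bddDelta (contragredient ρ) n (bq q) g) v) U
      (𝓝 ((bddDelta (contragredient ρ) n b g) v)) := by
    simp only [bddDelta, ContinuousLinearMap.add_apply, ContinuousLinearMap.sum_apply,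
        ContinuousLinearMap.smul_apply]
    refine (Tendsto.add ?_ (tendsto_finsetSum _ fun j _ => (hbt _ v).const_smul _)).add
      ((hbt _ v).const_smul _)
    exact hbt _ (ρ (g 0)⁻¹ v)
  refine tendsto_nhds_unique t1 ?_
  have t2 : Tendsto (fun q : Finset G × ℕ => 3 * (1 / ((q.2 : ℝ) + 1)) * ‖v‖) atTop (𝓝 0) := by
    have h0 : Tendsto (fun q : Finset G × ℕ => q.2) atTop atTop := by
      rw [← prod_atTop_atTop_eq]; exact tendsto_snd
    have := ((tendsto_one_div_add_atTop_nhds_zero_nat (𝕜 := ℝ)).comp h0).const_mul 3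
    simpa using this.mul_const ‖v‖
  rw [tendsto_iff_norm_sub_tendsto_zero]
  refine squeeze_zero' (Eventually.of_forall fun _ => norm_nonneg _) ?_ (t2.mono_left hU)
  refine hU ?_
  filter_upwards [eventually_ge_atTop ((Finset.univ.image g, 0) : Finset G × ℕ)] with q hq
  have h1 := hb2 q g (fun k => hq.1 (Finset.mem_image_of_mem _ (Finset.mem_univ _)))
  rw [norm_sub_rev, ← ContinuousLinearMap.sub_apply]
  exact (ContinuousLinearMap.le_opNorm _ _).trans
    (mul_le_mul_of_nonneg_right h1 (norm_nonneg _))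

theorem acyclic_of_commuting {G : Type*} [Group G]
    (hG : ∀ S : Finset G, ∃ s : G, ∀ a ∈ S, ∀ b ∈ S, ∀ i j : ℕ, i ≠ j →
      Commute (s ^ i * a * (s ^ i)⁻¹) (s ^ j * b * (s ^ j)⁻¹)) :
    BoundedlyAcyclic G := by
  rintro n f ⟨C, hC⟩ hf
  haveI : TopologicalSpace.SeparableSpace (ℝ →L[ℝ] ℝ) := by
    haveI := FiniteDimensional.proper ℝ (ℝ →L[ℝ] ℝ)
    infer_instance
  have hv := vanish_of_commuting (1 : G →* (ℝ ≃ₗᵢ[ℝ] ℝ)) hG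
  have htr : ∀ (g : G) φ, contragredient (1 : G →* (ℝ ≃ₗᵢ[ℝ] ℝ)) g φ = φ := by
    intro g φ
    ext
    rfl
  let ι : ℝ →L[ℝ] ℝ := ContinuousLinearMap.id ℝ ℝ
  obtain ⟨b, ⟨D, hD⟩, hb⟩ := hv n (fun g => f g • ι) ⟨C * ‖ι‖, fun g => by
    rw [norm_smul]; exact mul_le_mul_of_nonneg_right (hC g) (norm_nonneg _)⟩ (by
    funext g
    have := congrFun hf g
    simp only [bddDelta, Pi.zero_apply, smul_eq_mul] at this
    simp only [bddDelta, htr, Pi.zero_apply, smul_smul]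
    rw [← Finset.sum_smul, ← add_smul, ← add_smul, this, zero_smul])
  refine ⟨fun x => b x 1, ⟨D, fun x => ?_⟩, ?_⟩
  · have := (b x).le_opNorm 1
    rw [norm_one, mul_one] at this
    exact this.trans (hD x)
  · funext g
    have := congrArg (fun φ : ℝ →L[ℝ] ℝ => φ 1) (congrFun hb g)
    simp only [bddDelta, htr, ContinuousLinearMap.add_apply, ContinuousLinearMap.sum_apply,
      ContinuousLinearMap.smul_apply] at this
    simp only [bddDelta]
    rw [this]
    simp [ι]

end Final

open Pointwise in
/-- Let `G` act faithfully on a set `Z` with a subset `Z₀ ⊆ Z` and an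
element `g ∈ G` such that: (i) every finite subset of `G` can be conjugated so that all
its elements are supported in `Z₀`; (ii) `g^p • Z₀` is disjoint from `Z₀` for every
integer `p ≥ 1`.  Then `Hb^n(G,E) = 0` for all `n ≥ 1` and all separable dual Banach
`G`-modules `E = F*`; in particular `G` is boundedly acyclic. -/
theorem vanishing_of_transformation_group.{u}
    {G Z : Type*} [Group G] [MulAction G Z] [FaithfulSMul G Z]
    (Z₀ : Set Z) (g : G)
    (hconj : ∀ S : Finset G, ∃ t : G, ∀ h ∈ S, ∀ z : Z, z ∉ Z₀ → (t * h * t⁻¹) • z = z)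
    (hdisj : ∀ p : ℤ, 1 ≤ p → Disjoint (g ^ p • Z₀) Z₀) :
    (∀ (F : Type u) [NormedAddCommGroup F] [NormedSpace ℝ F] [CompleteSpace F]
      (ρ : G →* (F ≃ₗᵢ[ℝ] F)),
      TopologicalSpace.SeparableSpace (F →L[ℝ] ℝ) → HbVanish (contragredient ρ)) ∧
    BoundedlyAcyclic G := by
  have hG := exists_commuting Z₀ g hconj hdisj
  refine ⟨?_, acyclic_of_commuting hG⟩
  intro F _ _ _ ρ hsep
  exact vanish_of_commuting ρ hG
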